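/- For every integer n ≥ 6, the three-element vertex set {p_2, p_{⌊n/2⌋+1}, p_n} of the convex polytope graph Δ_n is independent (its three vertices are pairwise non-adjacent in Δ_n) and is a resolving set of Δ_n. -/

import Mathlib

/-- Vertices of the heptagonal circular ladder: four families indexed by `ZMod n`. -/
inductive HCLVertex (n : ℕ) : Type
  | p (t : ZMod n) : HCLVertex n
  | q (t : ZMod n) : HCLVertex n
  | r (t : ZMod n) : HCLVertex n
  | s (t : ZMod n) : HCLVertex n
deriving DecidableEq

/-- Base relation giving the edges of the heptagonal circular ladder `Γ_n`:
`p_t p_{t+1}`, `p_t q_t`, `q_t r_t`, `r_t s_t`, `s_t r_{t+1}` (indices mod `n`). -/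
def gammaRel (n : ℕ) : HCLVertex n → HCLVertex n → Prop
  | .p t, .p u => u = t + 1
  | .p t, .q u => u = t
  | .q t, .r u => u = t
  | .r t, .s u => u = t
  | .s t, .r u => u = t + 1
  | _, _ => False

/-- The heptagonal circular ladder `Γ_n`. -/
def Gamma (n : ℕ) : SimpleGraph (HCLVertex n) :=
  SimpleGraph.fromRel (gammaRel n)

/-- The extra edges `r_t q_{t+1}` added to `Γ_n` to obtain `Δ_n`. -/
def deltaRel (n : ℕ) : HCLVertex n → HCLVertex n → Prop
  | .r t, .q u => u = t + 1
  | _, _ => False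

/-- The convex polytope graph `Δ_n`, obtained from `Γ_n` by adding the edges `r_t q_{t+1}`. -/
def Delta (n : ℕ) : SimpleGraph (HCLVertex n) :=
  SimpleGraph.fromRel (fun v w => gammaRel n v w ∨ deltaRel n v w)

/-- `W` is a resolving set of `G`: every pair of distinct vertices is distinguished by
its distance to some vertex of `W`. -/
def IsResolving {V : Type*} (G : SimpleGraph V) (W : Set V) : Prop :=
  ∀ u v : V, u ≠ v → ∃ w ∈ W, G.dist w u ≠ G.dist w v

/-- Distance from a vertex `x` to an edge `e = yz`: `min (d x y) (d x z)`. -/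
noncomputable def edgeDist {V : Type*} (G : SimpleGraph V) (x : V) (e : Sym2 V) : ℕ :=
  Sym2.lift ⟨fun y z => min (G.dist x y) (G.dist x z), fun y z => min_comm _ _⟩ e

/-- `W` is an edge resolving set of `G`: every pair of distinct edges is distinguished by
its distance to some vertex of `W`. -/
def IsEdgeResolving {V : Type*} (G : SimpleGraph V) (W : Set V) : Prop :=
  ∀ e ∈ G.edgeSet, ∀ f ∈ G.edgeSet, e ≠ f → ∃ w ∈ W, edgeDist G w e ≠ edgeDist G w f

/-! Drop every vertex of `Δ_n` onto the cycle of the `p_t`. A vertex at height `c` (where `p`, `q`,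
`r`, `s` have heights `0`, `1`, `2`, `3`) casts as its shadow an arc with `max (c - 1) 0` edges, and
its distance from `p_a` is `c` plus the distance on the cycle from `a` to this arc.

Consider three landmarks cutting the cycle into geodesics. If `u` is lower than `v` by `δ > 0` and
both have the same distances from the landmarks, then the shadow of `u` is farther than that of `v`
from every landmark by exactly `δ`. In particular it contains no landmark, so it lies inside one of
the three geodesics `xy`, whose length is the width of the shadow plus its distances from `x` and
`y`. For `v` this sum is at least the length of `xy`, so the shadow of `v` is wider than that of `u`
by at least `2δ`, whereas widths grow no faster than heights. Hence the landmarks determine heights,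
and two landmarks that are neither too close nor nearly antipodal locate an arc of given width. -/

/-- The number of steps from `a` to `b` along the cycle `ℤ_n` in the increasing direction. -/
def cyclicGap {n : ℕ} (a b : ZMod n) : ℕ := (b - a).val

/-- The distance on the cycle `ℤ_n` from the vertex `a` to the arc `{t, t + 1, …, t + w}`.
The truncated subtraction gives `0` when the arc reaches `a` from below. -/
def arcDist {n : ℕ} (a t : ZMod n) (w : ℕ) : ℕ := min (cyclicGap a t) (n - (cyclicGap a t + w))

namespace HCLVertex

/-- The height of a vertex of `Δ_n` above the cycle of the `p_t`. -/
def layer {n : ℕ} : HCLVertex n → ℕ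
  | p _ => 0
  | q _ => 1
  | r _ => 2
  | s _ => 3

/-- The position `t` of the vertices `p_t`, `q_t`, `r_t`, `s_t` within their families. -/
def index {n : ℕ} : HCLVertex n → ZMod n
  | p t | q t | r t | s t => t

theorem layer_le_three {n : ℕ} (v : HCLVertex n) : v.layer ≤ 3 := by
  cases v <;> simp [layer]

theorem eq_of_layer_eq_of_index_eq {n : ℕ} {u v : HCLVertex n} (hlayer : u.layer = v.layer)
    (hindex : u.index = v.index) : u = v := by
  cases u <;> cases v <;> simp_all [layer, index]

end HCLVertex

/-- The closed form of the distance from `p_a` in `Δ_n`: the height of the vertex plus the distance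
from `a` to its shadow. The shadow has width `layer - 1`, truncated to `0` for the `p_t`. -/
def pDist {n : ℕ} (a : ZMod n) (v : HCLVertex n) : ℕ :=
  v.layer + arcDist a v.index (v.layer - 1)

section Distance

variable {V : Type*} {G : SimpleGraph V} {f : V → ℕ}

theorem le_add_walk_length_of_adj_le (hf : ∀ v w, G.Adj v w → f w ≤ f v + 1) {u v : V}
    (W : G.Walk u v) : f v ≤ f u + W.length := by
  induction W with
  | nil => simp
  | cons h W ih =>
    have := hf _ _ h
    rw [SimpleGraph.Walk.length_cons]
    omega

theorem exists_walk_length_le_of_descent {u : V} (hf : ∀ v, v ≠ u → ∃ w, G.Adj w v ∧ f w < f v)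
    (v : V) : ∃ W : G.Walk u v, W.length ≤ f v := by
  induction hm : f v using Nat.strong_induction_on generalizing v with
  | _ m ih =>
    by_cases hvu : v = u
    · subst hvu
      exact ⟨.nil, by simp⟩
    · obtain ⟨w, hwv, hlt⟩ := hf v hvu
      obtain ⟨W, hW⟩ := ih (f w) (hm ▸ hlt) w rfl
      exact ⟨W.concat hwv, by rw [SimpleGraph.Walk.length_concat]; omega⟩

theorem dist_eq_of_adj_le_of_descent {u : V} (hu : f u = 0)
    (hle : ∀ v w, G.Adj v w → f w ≤ f v + 1)
    (hdesc : ∀ v, v ≠ u → ∃ w, G.Adj w v ∧ f w < f v) (v : V) : G.dist u v = f v := by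
  obtain ⟨W, hW⟩ := exists_walk_length_le_of_descent hdesc v
  obtain ⟨S, hS⟩ := W.reachable.exists_walk_length_eq_dist
  refine le_antisymm ((SimpleGraph.dist_le W).trans hW) ?_
  calc f v ≤ f u + S.length := le_add_walk_length_of_adj_le hle S
    _ = G.dist u v := by rw [hu, hS, zero_add]

end Distance

section Arcs

variable {n : ℕ}

@[simp]
theorem cyclicGap_self (a : ZMod n) : cyclicGap a a = 0 := by
  simp [cyclicGap]

theorem cyclicGap_eq_zero_iff {a b : ZMod n} : cyclicGap a b = 0 ↔ a = b := by
  rw [cyclicGap, ZMod.val_eq_zero, sub_eq_zero, eq_comm]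

theorem cyclicGap_natCast {x y : ℕ} (hxy : x ≤ y) (hyx : y < x + n) :
    cyclicGap (x : ZMod n) (y : ZMod n) = y - x := by
  rw [cyclicGap, ← Nat.cast_sub hxy, ZMod.val_natCast_of_lt (by omega)]

theorem arcDist_self (a : ZMod n) (w : ℕ) : arcDist a a w = 0 := by
  simp [arcDist]

theorem arcDist_zero (a t : ZMod n) : arcDist a t 0 = min (cyclicGap a t) (n - cyclicGap a t) :=
  rfl

variable [NeZero n]

theorem cyclicGap_lt (a b : ZMod n) : cyclicGap a b < n :=
  ZMod.val_lt _

theorem cyclicGap_add_cyclicGap (a b c : ZMod n) :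
    cyclicGap a b + cyclicGap b c = cyclicGap a c ∨
      cyclicGap a b + cyclicGap b c = cyclicGap a c + n := by
  have hsum : c - a = (b - a) + (c - b) := by ring
  simp only [cyclicGap, hsum]
  rcases lt_or_ge ((b - a).val + (c - b).val) n with h | h
  · exact .inl (ZMod.val_add_of_lt h).symm
  · exact .inr (ZMod.val_add_val_of_le h)

theorem cyclicGap_add_one (a t : ZMod n) :
    cyclicGap a (t + 1) = cyclicGap a t + 1 ∨
      cyclicGap a (t + 1) = 0 ∧ cyclicGap a t + 1 = n := by
  have hmod : cyclicGap a (t + 1) = (cyclicGap a t + 1) % n := by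
    rw [cyclicGap, cyclicGap, add_sub_right_comm, ZMod.val_add, ZMod.val_one_eq_one_mod,
      Nat.add_mod_mod]
  rcases (Nat.succ_le_of_lt (cyclicGap_lt a t)).lt_or_eq with h | h
  · exact .inl (hmod.trans (Nat.mod_eq_of_lt h))
  · exact .inr ⟨by rw [hmod, ← Nat.succ_eq_add_one, h, Nat.mod_self], h⟩

theorem cyclicGap_add_cyclicGap_add_cyclicGap {a b c : ZMod n} (hpos : 0 < cyclicGap a b)
    (hab : 2 * cyclicGap a b ≤ n) (hbc : 2 * cyclicGap b c ≤ n) (hca : 2 * cyclicGap c a ≤ n) :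
    cyclicGap a b + cyclicGap b c + cyclicGap c a = n := by
  have habc := cyclicGap_add_cyclicGap a b c
  have haca := cyclicGap_add_cyclicGap a c a
  rw [cyclicGap_self] at haca
  omega

theorem cyclicGap_lt_or_lt_or_lt {a b c : ZMod n}
    (hsum : cyclicGap a b + cyclicGap b c + cyclicGap c a = n) (t : ZMod n) :
    cyclicGap a t < cyclicGap a b ∨ cyclicGap b t < cyclicGap b c ∨
      cyclicGap c t < cyclicGap c a := by
  have habt := cyclicGap_add_cyclicGap a b t
  have hbct := cyclicGap_add_cyclicGap b c t
  have hat := cyclicGap_lt a t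
  have hbt := cyclicGap_lt b t
  have hct := cyclicGap_lt c t
  omega

theorem arcDist_width_add_one (a t : ZMod n) (w : ℕ) :
    arcDist a t (w + 1) = min (arcDist a t w) (arcDist a (t + 1) w) := by
  -- `{t, …, t + w + 1}` is the union of `{t, …, t + w}` and `{t + 1, …, t + 1 + w}`.
  have := cyclicGap_add_one a t
  simp only [arcDist]
  omega

theorem arcDist_add_one_le (a t : ZMod n) (w : ℕ) :
    arcDist a (t + 1) w ≤ arcDist a t w + 1 := by
  have := cyclicGap_add_one a t
  simp only [arcDist]
  omega

theorem arcDist_le_arcDist_add_one (a t : ZMod n) (w : ℕ) :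
    arcDist a t w ≤ arcDist a (t + 1) w + 1 := by
  have := cyclicGap_add_one a t
  simp only [arcDist]
  omega

theorem arcDist_sub_one_lt_or_arcDist_add_one_lt {a t : ZMod n} (h : t ≠ a) :
    arcDist a (t - 1) 0 < arcDist a t 0 ∨ arcDist a (t + 1) 0 < arcDist a t 0 := by
  have hpos := mt cyclicGap_eq_zero_iff.mp h.symm
  have hlt := cyclicGap_lt a t
  have hpred := cyclicGap_add_one a (t - 1)
  have hsucc := cyclicGap_add_one a t
  rw [sub_add_cancel] at hpred
  simp only [arcDist_zero]
  omega

theorem cyclicGap_le_arcDist_add_arcDist {a b : ZMod n} (hab : 2 * cyclicGap a b ≤ n)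
    (t : ZMod n) (w : ℕ) : cyclicGap a b ≤ arcDist a t w + w + arcDist b t w := by
  have habt := cyclicGap_add_cyclicGap a b t
  have hat := cyclicGap_lt a t
  have hbt := cyclicGap_lt b t
  simp only [arcDist]
  omega

theorem arcDist_add_arcDist_le_cyclicGap {a b t : ZMod n} {w : ℕ}
    (ht : cyclicGap a t < cyclicGap a b) (hb : 0 < arcDist b t w) :
    arcDist a t w + w + arcDist b t w ≤ cyclicGap a b := by
  have habt := cyclicGap_add_cyclicGap a b t
  simp only [arcDist] at hb ⊢
  omega

theorem eq_or_cyclicGap_add_eq_of_arcDist_eq {a t u : ZMod n} {w : ℕ}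
    (h : arcDist a t w = arcDist a u w) :
    t = u ∨ cyclicGap a t + cyclicGap a u + w = n ∨ arcDist a t w = 0 ∧ arcDist a u w = 0 := by
  have hatu := cyclicGap_add_cyclicGap a t u
  have htu := cyclicGap_lt t u
  rw [← cyclicGap_eq_zero_iff]
  simp only [arcDist] at h ⊢
  omega

theorem eq_of_arcDist_eq {a b t u : ZMod n} {w : ℕ} (hpos : 0 < cyclicGap a b)
    (hw : w ≤ cyclicGap a b) (hlt : 2 * cyclicGap a b < n) (hwn : 2 * cyclicGap a b + w ≤ n)
    (ha : arcDist a t w = arcDist a u w) (hb : arcDist b t w = arcDist b u w) : t = u := by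
  have habt := cyclicGap_add_cyclicGap a b t
  have habu := cyclicGap_add_cyclicGap a b u
  have hat := cyclicGap_lt a t
  have hbt := cyclicGap_lt b t
  have hbu := cyclicGap_lt b u
  have hatu := cyclicGap_add_cyclicGap a t u
  have htu := cyclicGap_lt t u
  by_contra hne
  have hgap := mt cyclicGap_eq_zero_iff.mp hne
  rcases (eq_or_cyclicGap_add_eq_of_arcDist_eq ha).resolve_left hne with hrefl_a | hcover_a <;>
    rcases (eq_or_cyclicGap_add_eq_of_arcDist_eq hb).resolve_left hne with hrefl_b | hcover_b
  -- The reflections fixing `a` and `b` differ by a rotation through `2 * cyclicGap a b`, so they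
  -- cannot both exchange the two arcs.
  · omega
  · simp only [arcDist] at hcover_b
    omega
  · simp only [arcDist] at hcover_a
    omega
  · simp only [arcDist] at hcover_a hcover_b
    omega

end Arcs

section Delta

open HCLVertex

variable {n : ℕ}

theorem pDist_p (a t : ZMod n) : pDist a (p t) = arcDist a t 0 :=
  zero_add _

theorem pDist_q (a t : ZMod n) : pDist a (q t) = pDist a (p t) + 1 := by
  rw [pDist_p, add_comm]
  rfl

theorem Delta_adj {v w : HCLVertex n} : (Delta n).Adj v w ↔
    v ≠ w ∧ ((gammaRel n v w ∨ deltaRel n v w) ∨ gammaRel n w v ∨ deltaRel n w v) :=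
  SimpleGraph.fromRel_adj _ _ _

variable [NeZero n]

theorem pDist_r (a t : ZMod n) :
    pDist a (r t) = min (pDist a (q t)) (pDist a (q (t + 1))) + 1 := by
  have hunion : arcDist a t 1 = min (arcDist a t 0) (arcDist a (t + 1) 0) :=
    arcDist_width_add_one a t 0
  change 2 + arcDist a t 1 = min (1 + arcDist a t 0) (1 + arcDist a (t + 1) 0) + 1
  omega

theorem pDist_s (a t : ZMod n) :
    pDist a (s t) = min (pDist a (r t)) (pDist a (r (t + 1))) + 1 := by
  have hunion : arcDist a t 2 = min (arcDist a t 1) (arcDist a (t + 1) 1) :=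
    arcDist_width_add_one a t 1
  change 3 + arcDist a t 2 = min (2 + arcDist a t 1) (2 + arcDist a (t + 1) 1) + 1
  omega

theorem pDist_le_of_rel (a : ZMod n) {v w : HCLVertex n} (h : gammaRel n v w ∨ deltaRel n v w) :
    pDist a w ≤ pDist a v + 1 ∧ pDist a v ≤ pDist a w + 1 := by
  have hcycle (t) : pDist a (p (t + 1)) ≤ pDist a (p t) + 1 ∧
      pDist a (p t) ≤ pDist a (p (t + 1)) + 1 := by
    simp only [pDist_p]
    exact ⟨arcDist_add_one_le a t 0, arcDist_le_arcDist_add_one a t 0⟩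
  rcases v with t | t | t | t <;> rcases w with u | u | u | u <;>
    simp only [gammaRel, deltaRel, or_false, false_or, or_self] at h <;>
    simp only [pDist_q, pDist_r, pDist_s, h] <;>
    have ht := hcycle t <;> have ht' := hcycle (t + 1) <;> omega

theorem pDist_le_of_adj (a : ZMod n) {v w : HCLVertex n} (h : (Delta n).Adj v w) :
    pDist a w ≤ pDist a v + 1 := by
  rcases (Delta_adj.mp h).2 with h | h
  · exact (pDist_le_of_rel a h).1
  · exact (pDist_le_of_rel a h).2

theorem exists_adj_pDist_lt {a : ZMod n} {v : HCLVertex n} (hv : v ≠ p a) :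
    ∃ w, (Delta n).Adj w v ∧ pDist a w < pDist a v := by
  rcases v with t | t | t | t
  case p =>
    have hlt := arcDist_sub_one_lt_or_arcDist_add_one_lt (show t ≠ a by rintro rfl; exact hv rfl)
    simp only [← pDist_p] at hlt
    rcases hlt with h | h
    · exact ⟨p (t - 1), Delta_adj.mpr ⟨by rintro e; simp [e] at h, by simp [gammaRel]⟩, h⟩
    · exact ⟨p (t + 1), Delta_adj.mpr ⟨by rintro e; simp [e] at h, by simp [gammaRel]⟩, h⟩
  case q => exact ⟨p t, Delta_adj.mpr ⟨by simp, by simp [gammaRel]⟩, by simp [pDist_q]⟩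
  case r =>
    rw [pDist_r]
    rcases min_choice (pDist a (q t)) (pDist a (q (t + 1))) with h | h <;> rw [h]
    · exact ⟨q t, Delta_adj.mpr ⟨by simp, by simp [gammaRel]⟩, Nat.lt_succ_self _⟩
    · exact ⟨q (t + 1), Delta_adj.mpr ⟨by simp, by simp [deltaRel]⟩, Nat.lt_succ_self _⟩
  case s =>
    rw [pDist_s]
    rcases min_choice (pDist a (r t)) (pDist a (r (t + 1))) with h | h <;> rw [h]
    · exact ⟨r t, Delta_adj.mpr ⟨by simp, by simp [gammaRel]⟩, Nat.lt_succ_self _⟩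
    · exact ⟨r (t + 1), Delta_adj.mpr ⟨by simp, by simp [gammaRel]⟩, Nat.lt_succ_self _⟩

theorem Delta_dist_p (a : ZMod n) (v : HCLVertex n) : (Delta n).dist (p a) v = pDist a v :=
  dist_eq_of_adj_le_of_descent (by rw [pDist_p, arcDist_self]) (fun _ _ => pDist_le_of_adj a)
    (fun _ => exists_adj_pDist_lt) v

theorem not_Delta_adj_p_p {a b : ZMod n} (htwo : 2 ≤ cyclicGap a b)
    (hhalf : 2 * cyclicGap a b ≤ n) : ¬(Delta n).Adj (p a) (p b) := by
  rw [← SimpleGraph.dist_eq_one_iff_adj, Delta_dist_p, pDist_p, arcDist_zero]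
  omega

theorem layer_le_of_pDist_eq_of_cyclicGap_lt {a b : ZMod n} {u v : HCLVertex n}
    (hab : 2 * cyclicGap a b ≤ n) (hu : cyclicGap a u.index < cyclicGap a b)
    (ha : pDist a u = pDist a v) (hb : pDist b u = pDist b v) : v.layer ≤ u.layer := by
  by_contra! hlt
  simp only [pDist] at ha hb
  have hpos : 0 < arcDist b u.index (u.layer - 1) := by omega
  have hinside := arcDist_add_arcDist_le_cyclicGap hu hpos
  have hgeodesic := cyclicGap_le_arcDist_add_arcDist hab v.index (v.layer - 1)
  have hwidth : u.layer - 1 + 2 * (v.layer - u.layer) ≤ v.layer - 1 := by omega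
  omega

theorem layer_le_of_pDist_eq {a b c : ZMod n} {u v : HCLVertex n} (hpos : 0 < cyclicGap a b)
    (hab : 2 * cyclicGap a b ≤ n) (hbc : 2 * cyclicGap b c ≤ n) (hca : 2 * cyclicGap c a ≤ n)
    (ha : pDist a u = pDist a v) (hb : pDist b u = pDist b v) (hc : pDist c u = pDist c v) :
    v.layer ≤ u.layer := by
  have hsum := cyclicGap_add_cyclicGap_add_cyclicGap hpos hab hbc hca
  rcases cyclicGap_lt_or_lt_or_lt hsum u.index with hu | hu | hu
  · exact layer_le_of_pDist_eq_of_cyclicGap_lt hab hu ha hb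
  · exact layer_le_of_pDist_eq_of_cyclicGap_lt hbc hu hb hc
  · exact layer_le_of_pDist_eq_of_cyclicGap_lt hca hu hc ha

theorem eq_of_pDist_eq_of_layer_eq {a b : ZMod n} {u v : HCLVertex n} (htwo : 2 ≤ cyclicGap a b)
    (hhalf : 2 * cyclicGap a b + 2 ≤ n) (hlayer : u.layer = v.layer)
    (ha : pDist a u = pDist a v) (hb : pDist b u = pDist b v) : u = v := by
  refine eq_of_layer_eq_of_index_eq hlayer ?_
  have hwidth := u.layer_le_three
  simp only [pDist, ← hlayer, Nat.add_left_cancel_iff] at ha hb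
  exact eq_of_arcDist_eq (by omega) (by omega) (by omega) (by omega) ha hb

theorem isResolving_Delta_p {a b c : ZMod n}
    (hab : 2 ≤ cyclicGap a b) (hab' : 2 * cyclicGap a b ≤ n)
    (hbc : 2 ≤ cyclicGap b c) (hbc' : 2 * cyclicGap b c ≤ n)
    (hca : 2 ≤ cyclicGap c a) (hca' : 2 * cyclicGap c a ≤ n) :
    IsResolving (Delta n) {p a, p b, p c} := by
  intro u v huv
  by_contra! h
  simp only [Set.mem_insert_iff, Set.mem_singleton_iff, forall_eq_or_imp, forall_eq,
    Delta_dist_p] at h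
  obtain ⟨ha, hb, hc⟩ := h
  have hpos : 0 < cyclicGap a b := by omega
  have hlayer : u.layer = v.layer :=
    le_antisymm (layer_le_of_pDist_eq hpos hab' hbc' hca' ha.symm hb.symm hc.symm)
      (layer_le_of_pDist_eq hpos hab' hbc' hca' ha hb hc)
  have hsum := cyclicGap_add_cyclicGap_add_cyclicGap hpos hab' hbc' hca'
  have hshort : 2 * cyclicGap a b + 2 ≤ n ∨ 2 * cyclicGap b c + 2 ≤ n ∨
      2 * cyclicGap c a + 2 ≤ n := by omega
  rcases hshort with hshort | hshort | hshort
  · exact huv (eq_of_pDist_eq_of_layer_eq hab hshort hlayer ha hb)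
  · exact huv (eq_of_pDist_eq_of_layer_eq hbc hshort hlayer hb hc)
  · exact huv (eq_of_pDist_eq_of_layer_eq hca hshort hlayer hc ha)

end Delta

theorem delta_p_set_independent_resolving_general {n x y z : ℕ}
    (hxy : x + 2 ≤ y) (hyz : y + 2 ≤ z) (hzx : z + 2 ≤ x + n)
    (hxy' : 2 * (y - x) ≤ n) (hyz' : 2 * (z - y) ≤ n) (hzx' : 2 * (x + n - z) ≤ n) :
    (∀ u ∈ ({.p (x : ZMod n), .p (y : ZMod n), .p (z : ZMod n)} : Set (HCLVertex n)),
      ∀ v ∈ ({.p (x : ZMod n), .p (y : ZMod n), .p (z : ZMod n)} : Set (HCLVertex n)),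
        ¬(Delta n).Adj u v) ∧
    IsResolving (Delta n) {.p (x : ZMod n), .p (y : ZMod n), .p (z : ZMod n)} := by
  have : NeZero n := ⟨by omega⟩
  have hgap_xy : cyclicGap (x : ZMod n) (y : ZMod n) = y - x :=
    cyclicGap_natCast (by omega) (by omega)
  have hgap_yz : cyclicGap (y : ZMod n) (z : ZMod n) = z - y :=
    cyclicGap_natCast (by omega) (by omega)
  have hgap_zx : cyclicGap (z : ZMod n) (x : ZMod n) = x + n - z := by
    rw [← cyclicGap_natCast (n := n) (by omega) (by omega)]
    simp
  have hadj_xy := not_Delta_adj_p_p (hgap_xy ▸ (by omega)) (hgap_xy ▸ hxy')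
  have hadj_yz := not_Delta_adj_p_p (hgap_yz ▸ (by omega)) (hgap_yz ▸ hyz')
  have hadj_zx := not_Delta_adj_p_p (hgap_zx ▸ (by omega)) (hgap_zx ▸ hzx')
  refine ⟨?_, isResolving_Delta_p (by omega) (by omega) (by omega) (by omega) (by omega)
    (by omega)⟩
  rintro u (rfl | rfl | rfl) v (rfl | rfl | rfl)
  exacts [SimpleGraph.irrefl _, hadj_xy, mt .symm hadj_zx,
    mt .symm hadj_xy, SimpleGraph.irrefl _, hadj_yz,
    hadj_zx, mt .symm hadj_yz, SimpleGraph.irrefl _]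

theorem delta_p_set_independent_resolving (n : ℕ) (hn : 6 ≤ n) :
    (∀ u ∈ ({HCLVertex.p (2 : ZMod n), HCLVertex.p ((n / 2 + 1 : ℕ) : ZMod n),
        HCLVertex.p ((n : ℕ) : ZMod n)} : Set (HCLVertex n)),
      ∀ v ∈ ({HCLVertex.p (2 : ZMod n), HCLVertex.p ((n / 2 + 1 : ℕ) : ZMod n),
        HCLVertex.p ((n : ℕ) : ZMod n)} : Set (HCLVertex n)), ¬ (Delta n).Adj u v) ∧
    IsResolving (Delta n)
      {HCLVertex.p (2 : ZMod n), HCLVertex.p ((n / 2 + 1 : ℕ) : ZMod n),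
        HCLVertex.p ((n : ℕ) : ZMod n)} := by
  exact_mod_cast delta_p_set_independent_resolving_general (n := n) (x := 2) (y := n / 2 + 1)
    (z := n) (by omega) (by omega) (by omega) (by omega) (by omega) (by omega)
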